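/- Let r be a positive odd integer. Let V be an F-vector space of dimension r+3 and Q a nondegenerate quadratic form on V of Witt defect 2 (an elliptic quadric). Let S be a spread of Q and let W be a hyperplane of V such that the restriction of Q to W is a nondegenerate quadratic form of Witt defect 1 (a parabolic hyperplane section). Then exactly q+1 members of S are contained in W. -/

import Mathlib

open Module Submodule

section Defs

variable {F : Type*} [Field F] {V : Type*} [AddCommGroup V] [Module F V]

/-- A subspace is totally singular if the quadratic form vanishes on it. -/
def IsTotallySingular (Q : QuadraticForm F V) (W : Submodule F V) : Prop :=
  ∀ x ∈ W, Q x = 0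

/-- The Witt index: maximal dimension of a totally singular subspace. -/
noncomputable def wittIndex (Q : QuadraticForm F V) : ℕ :=
  sSup {n : ℕ | ∃ W : Submodule F V, IsTotallySingular Q W ∧ Module.finrank F ↥W = n}

/-- Nondegeneracy: the only singular vector orthogonal to everything is `0`. -/
def QuadNondeg (Q : QuadraticForm F V) : Prop :=
  ∀ v : V, Q v = 0 → (∀ x : V, QuadraticMap.polar Q v x = 0) → v = 0

/-- A generator: totally singular subspace of dimension the Witt index. -/
def IsGenerator (Q : QuadraticForm F V) (G : Submodule F V) : Prop :=
  IsTotallySingular Q G ∧ Module.finrank F ↥G = wittIndex Q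

/-- A spread of `Q`. -/
def IsSpread (Q : QuadraticForm F V) (S : Set (Submodule F V)) : Prop :=
  (∀ G ∈ S, IsGenerator Q G) ∧
  (∀ G ∈ S, ∀ G' ∈ S, G ≠ G' → G ⊓ G' = ⊥) ∧
  (∀ v : V, Q v = 0 → ∃ G ∈ S, v ∈ G)

/-- The perp of a vector with respect to the polar form of `Q`. -/
def vecPerp (Q : QuadraticForm F V) (u : V) : Submodule F V :=
  LinearMap.ker (QuadraticMap.polarBilin Q u)

/-- The perp of a subspace with respect to the polar form of `Q`. -/
def subPerp (Q : QuadraticForm F V) (G : Submodule F V) : Submodule F V :=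
  ⨅ g ∈ G, vecPerp Q g

/-- Hyperbolic (e = 0), parabolic (e = 1) or elliptic (e = 2) affine vector space
partition for `(U, H, Q, Pgen)`. -/
def IsAvsp [Fintype F] (e r : ℕ) {U : Type*} [AddCommGroup U] [Module F U]
    (H : Submodule F U) (Q : QuadraticForm F ↥H) (Pgen : Submodule F ↥H)
    (P : Set (Submodule F U)) : Prop :=
  P.ncard = Fintype.card F ^ ((r + e + 1) / 2) ∧
  (∀ S ∈ P, Module.finrank F ↥S = (r + 3 - e) / 2 ∧ ¬ S ≤ H) ∧
  (∀ L : Submodule F U, Module.finrank F ↥L = 1 → ¬ L ≤ H → ∃! S, S ∈ P ∧ L ≤ S) ∧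
  (∀ S ∈ P, IsGenerator Q (S.comap H.subtype) ∧ S.comap H.subtype ⊓ Pgen = ⊥) ∧
  (∀ S ∈ P, ∀ T ∈ P, S ≠ T → S.comap H.subtype ≠ T.comap H.subtype) ∧
  (∀ S ∈ P, ∀ T ∈ P, S ≠ T → Module.finrank F ↥(S ⊓ T) ≤ 1) ∧
  (∀ S ∈ P, ∀ T ∈ P, S ≠ T →
    Module.finrank F ↥(S.comap H.subtype ⊓ T.comap H.subtype) = 1 →
      QuadNondeg (Q.comp ((S ⊔ T).comap H.subtype).subtype) ∧
      Module.finrank F ↥((S ⊔ T).comap H.subtype) =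
        2 * wittIndex (Q.comp ((S ⊔ T).comap H.subtype).subtype))

end Defs

section SingularVectors

variable {F : Type*} [Field F] {V : Type*} [AddCommGroup V] [Module F V]

/-- The Witt index is attained. -/
theorem exists_isGenerator [FiniteDimensional F V] (Q : QuadraticForm F V) :
    ∃ G : Submodule F V, IsGenerator Q G := by
  have hne : {n : ℕ | ∃ W : Submodule F V,
      IsTotallySingular Q W ∧ Module.finrank F ↥W = n}.Nonempty :=
    ⟨0, ⊥, by simp [IsTotallySingular], by simp⟩
  have hbdd : BddAbove {n : ℕ | ∃ W : Submodule F V,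
      IsTotallySingular Q W ∧ Module.finrank F ↥W = n} := by
    refine ⟨Module.finrank F V, ?_⟩
    rintro n ⟨W, -, rfl⟩
    exact W.finrank_le
  exact Nat.sSup_mem hne hbdd

theorem IsTotallySingular.finrank_le_wittIndex [FiniteDimensional F V] {Q : QuadraticForm F V}
    {U : Submodule F V} (hU : IsTotallySingular Q U) : Module.finrank F ↥U ≤ wittIndex Q := by
  refine le_csSup ⟨Module.finrank F V, ?_⟩ ⟨U, hU, rfl⟩
  rintro n ⟨W, -, rfl⟩
  exact W.finrank_le

/-- A singular vector orthogonal to a generator lies in it. -/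
theorem IsGenerator.mem_of_polar_eq_zero [FiniteDimensional F V] {Q : QuadraticForm F V}
    {G : Submodule F V} (hG : IsGenerator Q G) {v : V} (hv : Q v = 0)
    (hperp : ∀ g ∈ G, QuadraticMap.polar Q g v = 0) : v ∈ G := by
  by_contra hvG
  have hts : IsTotallySingular Q (G ⊔ F ∙ v) := by
    intro x hx
    obtain ⟨g, hg, y, hy, rfl⟩ := Submodule.mem_sup.1 hx
    obtain ⟨c, rfl⟩ := Submodule.mem_span_singleton.1 hy
    rw [QuadraticMap.map_add Q, hG.1 g hg, QuadraticMap.map_smul, hv,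
      QuadraticMap.polar_smul_right, hperp g hg]
    simp
  have hlt : G < G ⊔ F ∙ v := by
    refine lt_of_le_of_ne le_sup_left fun h => hvG ?_
    rw [h]
    exact Submodule.mem_sup_right (Submodule.mem_span_singleton_self v)
  have h1 := Submodule.finrank_lt_finrank_of_lt hlt
  have h2 := hts.finrank_le_wittIndex
  have h3 := hG.2
  omega

/-- The vectors orthogonal to a totally singular subspace of a nondegenerate form
form a subspace of complementary dimension. -/
theorem QuadNondeg.finrank_add_finrank_perp [FiniteDimensional F V] {Q : QuadraticForm F V}
    (hQ : QuadNondeg Q) {G : Submodule F V} (hG : IsTotallySingular Q G) :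
    Module.finrank F ↥G +
      Module.finrank F ↥(G.map (QuadraticMap.polarBilin Q)).dualCoannihilator =
        Module.finrank F V := by
  rw [← Subspace.finrank_add_finrank_dualCoannihilator_eq (G.map (QuadraticMap.polarBilin Q))]
  congr 1
  have hinj : Function.Injective ((QuadraticMap.polarBilin Q).domRestrict G) := by
    rw [← LinearMap.ker_eq_bot, LinearMap.ker_eq_bot']
    intro g hg
    refine Subtype.ext (hQ g (hG g g.2) fun x => ?_)
    simpa using LinearMap.congr_fun hg x
  rw [← LinearMap.finrank_range_of_inj hinj, LinearMap.range_domRestrict]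

/-- All level sets of a nonzero linear functional have the same size. -/
theorem card_mul_card_fiber [Fintype F] [Finite V] {f : V →ₗ[F] F} (hf : f ≠ 0) (a : F) :
    Fintype.card F * Nat.card {g : V // f g = a} = Nat.card V := by
  have hsurj := LinearMap.surjective hf
  obtain ⟨b, hb⟩ := hsurj a
  have e : Nat.card {g : V // f g = a} = Nat.card ↥(LinearMap.ker f) :=
    Nat.card_congr ((Equiv.subRight b).subtypeEquiv fun g => by
      simp [LinearMap.mem_ker, sub_eq_zero, hb])
  have hr : Module.finrank F ↥(LinearMap.range f) = 1 := by
    rw [LinearMap.range_eq_top.2 hsurj]; simp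
  have := LinearMap.finrank_range_add_finrank_ker f
  rw [e, Module.natCard_eq_pow_finrank (K := F), Module.natCard_eq_pow_finrank (K := F) (V := V),
    ← this, hr, pow_add, pow_one, Nat.card_eq_fintype_card]

open Classical in
/-- The number of singular vectors of a nondegenerate form of Witt index `w` in dimension
`w + c`. -/
theorem QuadNondeg.card_singular [Fintype F] [FiniteDimensional F V] {Q : QuadraticForm F V}
    (hQ : QuadNondeg Q) {c : ℕ} (hc : Module.finrank F V = wittIndex Q + c) :
    Fintype.card F * Nat.card {v : V // Q v = 0} + Fintype.card F ^ c =
      Fintype.card F ^ (wittIndex Q + c) + Fintype.card F ^ (wittIndex Q + 1) := by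
  have : Finite V := Module.finite_of_finite F
  have : Fintype V := Fintype.ofFinite V
  obtain ⟨G, hG⟩ := exists_isGenerator Q
  set P := (G.map (QuadraticMap.polarBilin Q)).dualCoannihilator with hP
  have memP : ∀ v, v ∈ P ↔ ∀ g ∈ G, QuadraticMap.polar Q g v = 0 := by
    intro v
    simp [hP, Submodule.mem_dualCoannihilator]
  have hPfin : Module.finrank F ↥P = c := by
    have := hQ.finrank_add_finrank_perp hG.1
    rw [hG.2, ← hP] at this
    omega
  have hGP : G ≤ P := fun v hv => (memP v).2 fun g hg => by
    rw [QuadraticMap.polar, hG.1 _ (G.add_mem hg hv), hG.1 g hg, hG.1 v hv]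
    simp
  have local_count : ∀ v : V,
      Fintype.card F * Nat.card {g : ↥G // Q (v + g) = 0} + (if v ∈ P then Nat.card ↥G else 0) =
        Nat.card ↥G + (if v ∈ G then Fintype.card F * Nat.card ↥G else 0) := by
    intro v
    have hexp : ∀ g : ↥G, Q (v + g) = Q v + QuadraticMap.polar Q g v := fun g => by
      rw [QuadraticMap.map_add Q, hG.1 g g.2, QuadraticMap.polar_comm Q v g, add_zero]
    by_cases hvP : v ∈ P
    · have hz := (memP v).1 hvP
      by_cases hvG : v ∈ G
      · have : ∀ g : ↥G, Q (v + g) = 0 := fun g => hG.1 _ (G.add_mem hvG g.2)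
        simp [hvP, hvG, this, add_comm]
      · have : ∀ g : ↥G, Q (v + g) ≠ 0 := fun g hg => by
          rw [hexp, hz g g.2, add_zero] at hg
          exact hvG (hG.mem_of_polar_eq_zero hg hz)
        simp [hvP, hvG, this]
    · have hvG : v ∉ G := fun h => hvP (hGP h)
      have hf : (QuadraticMap.polarBilin Q v).domRestrict G ≠ 0 := fun h => hvP <|
        (memP v).2 fun g hg => by
          rw [QuadraticMap.polar_comm]
          simpa using LinearMap.congr_fun h ⟨g, hg⟩
      have hcount := card_mul_card_fiber hf (-Q v)
      have : Nat.card {g : ↥G // Q (v + g) = 0} =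
          Nat.card {g : ↥G // (QuadraticMap.polarBilin Q v).domRestrict G g = -Q v} :=
        Nat.card_congr (Equiv.subtypeEquivRight fun g => by
          rw [hexp, QuadraticMap.polar_comm]
          simp [eq_neg_iff_add_eq_zero, add_comm])
      rw [this, hcount]
      simp [hvP, hvG]
  have double_count :
      ∑ v : V, Nat.card {g : ↥G // Q (v + g) = 0} = Nat.card ↥G * Nat.card {v : V // Q v = 0} := by
    have shift : ∀ g : ↥G, (∑ v : V, if Q (v + g) = 0 then 1 else 0) =
        ∑ v : V, if Q v = 0 then 1 else 0 := fun g =>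
      Fintype.sum_equiv (Equiv.addRight (g : V)) _ _ fun v => rfl
    simp only [Nat.card_eq_fintype_card (α := {g : ↥G // _}),
      Nat.card_eq_fintype_card (α := {v : V // Q v = 0}), Fintype.card_subtype,
      Finset.card_filter]
    rw [Finset.sum_comm, Finset.sum_congr rfl fun g _ => shift g, Finset.sum_const, smul_eq_mul,
      Finset.card_univ, Nat.card_eq_fintype_card]
  have total := Finset.sum_congr (rfl : (Finset.univ : Finset V) = _) fun v _ => local_count v
  have card_mem : ∀ U : Submodule F V, (Finset.univ.filter (· ∈ U)).card = Nat.card ↥U := by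
    intro U
    rw [Nat.card_eq_fintype_card, Fintype.card_subtype]
  rw [Finset.sum_add_distrib, Finset.sum_add_distrib, ← Finset.mul_sum, double_count,
    ← Finset.sum_filter, ← Finset.sum_filter] at total
  simp only [Finset.sum_const, card_mem, smul_eq_mul, Finset.card_univ,
    ← Nat.card_eq_fintype_card (α := V)] at total
  have hq : 0 < Fintype.card F := Fintype.card_pos
  rw [Module.natCard_eq_pow_finrank (K := F) (V := ↥G),
    Module.natCard_eq_pow_finrank (K := F) (V := ↥P),
    Module.natCard_eq_pow_finrank (K := F) (V := V), hG.2, hPfin, hc,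
    Nat.card_eq_fintype_card] at total
  apply Nat.eq_of_mul_eq_mul_left (pow_pos hq (wittIndex Q))
  linear_combination total

/-- The singular vectors of a subspace are partitioned, apart from zero, by a spread. -/
theorem IsSpread.card_singular_inf [Finite V] {Q : QuadraticForm F V}
    {S : Finset (Submodule F V)} (hS : IsSpread Q (S : Set (Submodule F V)))
    (U : Submodule F V) :
    Nat.card {v : ↥U // Q v = 0} + S.card = ∑ G ∈ S, Nat.card ↥(G ⊓ U) + 1 := by
  classical
  have : Fintype V := Fintype.ofFinite V
  obtain ⟨hgen, hdisj, hcov⟩ := hS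
  let N : Submodule F V → Finset V := fun G => Finset.univ.filter fun v => v ∈ G ⊓ U ∧ v ≠ 0
  have card_N : ∀ G, Nat.card ↥(G ⊓ U) = (N G).card + 1 := by
    intro G
    have h : Finset.univ.filter (· ∈ G ⊓ U) = insert 0 (N G) := by
      ext v
      by_cases hv : v = 0 <;> simp [N, hv]
    rw [Nat.card_eq_fintype_card, Fintype.card_subtype, h, Finset.card_insert_of_notMem]
    simp [N]
  have card_sing : Nat.card {v : ↥U // Q v = 0} = (S.biUnion N).card + 1 := by
    have h : Finset.univ.filter (fun v => v ∈ U ∧ Q v = 0) = insert 0 (S.biUnion N) := by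
      ext v
      by_cases hv : v = 0
      · simp [hv]
      · simp only [Finset.mem_filter, Finset.mem_univ, true_and, Finset.mem_insert, hv, false_or,
          Finset.mem_biUnion, N, Submodule.mem_inf]
        constructor
        · rintro ⟨hvU, hvQ⟩
          obtain ⟨G, hG, hvG⟩ := hcov v hvQ
          exact ⟨G, hG, ⟨hvG, hvU⟩, hv⟩
        · rintro ⟨G, hG, ⟨hvG, hvU⟩, -⟩
          exact ⟨hvU, (hgen G hG).1 v hvG⟩
    rw [Nat.card_congr (Equiv.subtypeSubtypeEquivSubtypeInter (· ∈ U) (fun v => Q v = 0)),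
      Nat.card_eq_fintype_card, Fintype.card_subtype, h, Finset.card_insert_of_notMem]
    simp [N]
  have hbi : (S.biUnion N).card = ∑ G ∈ S, (N G).card := by
    refine Finset.card_biUnion fun G hG G' hG' hne => Finset.disjoint_left.2 fun v hv hv' => ?_
    simp only [N, Finset.mem_filter, Finset.mem_univ, true_and, Submodule.mem_inf] at hv hv'
    have : v ∈ G ⊓ G' := ⟨hv.1.1, hv'.1.1⟩
    rw [hdisj G hG G' hG' hne, Submodule.mem_bot] at this
    exact hv.2 this
  rw [card_sing, hbi, Finset.sum_congr rfl fun G _ => card_N G, Finset.sum_add_distrib]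
  simp
  omega

/-- A subspace not contained in a hyperplane meets it in codimension one. -/
theorem finrank_inf_add_one_of_not_le [FiniteDimensional F V] {G W : Submodule F V}
    (hW : Module.finrank F ↥W + 1 = Module.finrank F V) (h : ¬ G ≤ W) :
    Module.finrank F ↥(G ⊓ W) + 1 = Module.finrank F ↥G := by
  have h1 := Submodule.finrank_sup_add_finrank_inf_eq G W
  have h2 := Submodule.finrank_lt_finrank_of_lt
    (lt_of_le_of_ne (le_sup_right : W ≤ G ⊔ W) fun e => h (e ▸ le_sup_left))
  have h3 := (G ⊔ W).finrank_le
  omega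

end SingularVectors

theorem elliptic_spread_parabolic_section {F : Type*} [Field F] [Fintype F] (r : ℕ)
    (hr : 0 < r) (hrodd : r % 2 = 1)
    (V : Type*) [AddCommGroup V] [Module F V] [FiniteDimensional F V]
    (hdim : Module.finrank F V = r + 3)
    (Q : QuadraticForm F V) (hQnd : QuadNondeg Q)
    (hdef : Module.finrank F V = 2 * wittIndex Q + 2)
    (S : Set (Submodule F V)) (hS : IsSpread Q S)
    (W : Submodule F V) (hW : Module.finrank F ↥W = r + 2)
    (hWnd : QuadNondeg (Q.comp W.subtype))
    (hWdef : Module.finrank F ↥W = 2 * wittIndex (Q.comp W.subtype) + 1) :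
    {G ∈ S | G ≤ W}.ncard = Fintype.card F + 1 := by
  classical
  have : Finite V := Module.finite_of_finite F
  have : Finite (Submodule F V) := Finite.of_injective _ SetLike.coe_injective
  obtain ⟨T, rfl⟩ := S.toFinite.exists_finset_coe
  obtain ⟨k, hk⟩ : ∃ k, wittIndex Q = k + 1 := ⟨wittIndex Q - 1, by omega⟩
  have hkW : wittIndex (Q.comp W.subtype) = k + 1 := by omega
  have hV := hQnd.card_singular (c := k + 3) (by omega)
  have hWc := hWnd.card_singular (c := k + 2) (by omega)
  have sV := hS.card_singular_inf ⊤
  have sW := hS.card_singular_inf W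
  have hset : {G ∈ (T : Set (Submodule F V)) | G ≤ W} =
      ((T.filter (· ≤ W) : Finset (Submodule F V)) : Set (Submodule F V)) := by
    ext G
    simp
  rw [hset, Set.ncard_coe_finset]
  have hTop : Nat.card {v : ↥(⊤ : Submodule F V) // Q v = 0} = Nat.card {v : V // Q v = 0} :=
    Nat.card_congr (Submodule.topEquiv.toEquiv.subtypeEquiv fun v => Iff.rfl)
  have hcomp : Nat.card {v : ↥W // Q.comp W.subtype v = 0} = Nat.card {v : ↥W // Q v = 0} := rfl
  have cardG : ∀ G ∈ T, Nat.card ↥(G ⊓ ⊤) = Fintype.card F ^ (k + 1) := by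
    intro G hG
    rw [inf_top_eq, Module.natCard_eq_pow_finrank (K := F), (hS.1 G hG).2, hk,
      Nat.card_eq_fintype_card]
  have cardGW : ∀ G ∈ T, Nat.card ↥(G ⊓ W) =
      if G ≤ W then Fintype.card F ^ (k + 1) else Fintype.card F ^ k := by
    intro G hG
    have hGr := (hS.1 G hG).2
    split_ifs with h
    · rw [inf_eq_left.2 h, Module.natCard_eq_pow_finrank (K := F), hGr, hk,
        Nat.card_eq_fintype_card]
    · have := finrank_inf_add_one_of_not_le (G := G) (W := W) (by omega) h
      rw [Module.natCard_eq_pow_finrank (K := F), Nat.card_eq_fintype_card,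
        show Module.finrank F ↥(G ⊓ W) = k by omega]
  rw [Finset.sum_congr rfl cardG, Finset.sum_const, smul_eq_mul, hTop] at sV
  rw [Finset.sum_congr rfl cardGW, Finset.sum_ite, Finset.sum_const, Finset.sum_const,
    smul_eq_mul, smul_eq_mul] at sW
  have hsplit := T.card_filter_add_card_filter_not (· ≤ W)
  rw [hcomp, hkW] at hWc
  rw [hk] at hV
  have hq : 1 < Fintype.card F := Fintype.one_lt_card
  generalize Nat.card {v : V // Q v = 0} = nV at *
  generalize Nat.card {v : ↥W // Q v = 0} = nW at *
  generalize (T.filter (· ≤ W)).card = a at *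
  generalize (T.filter (¬ · ≤ W)).card = b at *
  generalize T.card = s at *
  generalize Fintype.card F = q at *
  zify at *
  rw [← hsplit] at sV sW
  have hx : (0 : ℤ) < q ^ k := by positivity
  have hqx : (q : ℤ) * (q * q ^ k - 1) ≠ 0 := by
    have : (1 : ℤ) < q * q ^ k := by nlinarith
    exact mul_ne_zero (by omega) (by omega)
  have hs : (a + b : ℤ) = q ^ 2 * q ^ k + 1 := by
    apply mul_left_cancel₀ hqx
    linear_combination hV - q * sV
  have hdiff : (q : ℤ) ^ k * q * (q - 1) * (a - (q + 1)) = 0 := by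
    linear_combination hWc - q * sW + (q - q * q ^ k) * hs
  have hne : (q : ℤ) ^ k * q * (q - 1) ≠ 0 := by
    have : (q : ℤ) - 1 ≠ 0 := by omega
    have : (q : ℤ) ≠ 0 := by omega
    positivity
  have := (mul_eq_zero.1 hdiff).resolve_left hne
  linarith
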